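/- For every integer μ ≥ 2 and every n ≥ 1 there exists a vector (s_0,...,s_n) of positive integers with s_0 = 1 such that the n-dimensional lattice Λ_n = {z ∈ Z^{n+1} : Σ s_i z_i = 0} has minimum at least μ and density Δ(Λ_n) ≥ (1 + n/(4μ))^{−n/2} / (2^n √((n+1)μ)). -/

import Mathlib

/-!
Build `s` greedily. Given `s₀, …, sₙ₋₁`, a new coordinate `t` creates a short vector of `Λₙ` only
if `t * k = ∑ sᵢwᵢ` for an integer point `w` in the ball of squared radius `μ` and some
`1 ≤ k < √μ`. Replacing `w` by `-w` shows that fewer than half of the integer points `w` have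
`∑ sᵢwᵢ > 0`, so some `t` at most `√μ / 2` times the number of integer points is allowed.

That number is at most `2 (μ + n / 4) ^ (n / 2) Vₙ`: around an integer point `z`, the half of the
unit cube where `⟪z, x - z⟫ ≤ 0` has volume at least `1 / 2`, these halves are disjoint, and they
lie in the ball of squared radius `μ + n / 4`.
-/

open Real

section Halving

open scoped Finset

theorem two_mul_card_filter_pos_add_one_le {G M : Type*} [AddGroup G] [AddCommGroup M]
    [LinearOrder M] [IsOrderedAddMonoid M] {f : G → M} (hf : f.Odd) {Z : Finset G}
    (hzero : 0 ∈ Z) (hneg : ∀ w ∈ Z, -w ∈ Z) :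
    2 * #{w ∈ Z | 0 < f w} + 1 ≤ #Z := by
  have hcard : #{w ∈ Z | 0 < f w} ≤ #{w ∈ Z | f w < 0} :=
    Finset.card_le_card_of_injOn Neg.neg (fun w hw => by simp_all [hf.eq]) neg_injective.injOn
  have hlt : #{w ∈ Z | f w < 0} < #{w ∈ Z | ¬ 0 < f w} :=
    Finset.card_lt_card <| Finset.ssubset_iff_of_subset
      (Finset.monotone_filter_right Z fun _ _ h => h.le.not_gt) |>.2
      ⟨0, by simp [hzero, hf.map_zero]⟩
  have hsplit := Z.card_filter_add_card_filter_not fun w => 0 < f w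
  omega

theorem measure_le_two_mul_measure_inter_nonpos {E M : Type*} [InvolutiveNeg E]
    [MeasurableSpace E] [MeasurableNeg E] [AddCommGroup M] [LinearOrder M] [IsOrderedAddMonoid M]
    (ν : MeasureTheory.Measure E) [ν.IsNegInvariant] {f : E → M} (hf : f.Odd) {Q : Set E}
    (hneg : ∀ u ∈ Q, -u ∈ Q) :
    ν Q ≤ 2 * ν (Q ∩ {u | f u ≤ 0}) := by
  set H := Q ∩ {u | f u ≤ 0}
  have hcover : Q ⊆ H ∪ -H := fun u hu =>
    (le_total (f u) 0).imp (fun h => ⟨hu, h⟩) fun h => ⟨hneg u hu, by simpa [hf.eq] using h⟩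
  calc ν Q ≤ ν (H ∪ -H) := MeasureTheory.measure_mono hcover
    _ ≤ ν H + ν (-H) := MeasureTheory.measure_union_le _ _
    _ = 2 * ν H := by rw [MeasureTheory.Measure.measure_neg, two_mul]

end Halving

section IntegerPoints

open scoped Finset Matrix

variable {ι : Type*} [Fintype ι]

theorem dotProduct_odd {R : Type*} [NonUnitalNonAssocRing R] (c : ι → R) :
    Function.Odd fun w : ι → R => c ⬝ᵥ w :=
  dotProduct_neg c

variable [DecidableEq ι]

variable (ι) in
/-- The integer points of the closed Euclidean ball of squared radius `r` about the origin. The box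
`[-r, r]^ι` only serves to make the set finite. -/
noncomputable def integerBall (r : ℕ) : Finset (ι → ℤ) :=
  (Fintype.piFinset fun _ => Finset.Icc (-(r : ℤ)) r).filter fun w => w ⬝ᵥ w ≤ r

theorem mem_integerBall {r : ℕ} {w : ι → ℤ} : w ∈ integerBall ι r ↔ w ⬝ᵥ w ≤ r := by
  simp only [integerBall, Finset.mem_filter, Fintype.mem_piFinset, Finset.mem_Icc,
    and_iff_right_iff_imp]
  intro hw i
  have hi : w i * w i ≤ w ⬝ᵥ w :=
    Finset.single_le_sum (f := fun i => w i * w i) (fun _ _ => mul_self_nonneg _)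
      (Finset.mem_univ i)
  constructor <;> nlinarith

theorem two_mul_card_filter_pos_integerBall_add_one_le (c : ι → ℤ) (r : ℕ) :
    2 * #{w ∈ integerBall ι r | 0 < c ⬝ᵥ w} + 1 ≤ #(integerBall ι r) :=
  two_mul_card_filter_pos_add_one_le (dotProduct_odd c) (by simp [mem_integerBall])
    (by simp [mem_integerBall])

theorem three_le_card_integerBall [Nonempty ι] {r : ℕ} (hr : 1 ≤ r) :
    3 ≤ #(integerBall ι r) := by
  let i : ι := Classical.arbitrary ι
  have hpos : 0 < #{w ∈ integerBall ι r | 0 < Pi.single i 1 ⬝ᵥ w} :=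
    Finset.card_pos.2 ⟨Pi.single i 1, by simpa [mem_integerBall] using hr⟩
  have := two_mul_card_filter_pos_integerBall_add_one_le (Pi.single i 1) r
  omega

theorem monotone_card_integerBall_fin (r : ℕ) : Monotone fun n => #(integerBall (Fin n) r) := by
  refine monotone_nat_of_le_succ fun n =>
    Finset.card_le_card_of_injOn (fun w => (Fin.snoc w 0 : Fin (n + 1) → ℤ)) (fun w hw => ?_)
      (Fin.snoc_left_injective (α := fun _ => ℤ) 0).injOn
  simpa [mem_integerBall, dotProduct, Fin.sum_univ_castSucc] using hw

end IntegerPoints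

section Volume

open MeasureTheory
open scoped Finset Matrix

variable {ι : Type*} [Fintype ι]

/-- The volume `π ^ (n / 2) / Γ(n / 2 + 1)` of the Euclidean unit ball in dimension `n`. -/
noncomputable def unitBallVolume (n : ℕ) : ℝ :=
  π ^ ((n : ℝ) / 2) / Real.Gamma ((n : ℝ) / 2 + 1)

theorem unitBallVolume_pos (n : ℕ) : 0 < unitBallVolume n :=
  div_pos (by positivity) (Real.Gamma_pos_of_pos (by positivity))

theorem volume_dotProduct_self_le [Nonempty ι] {R : ℝ} (hR : 0 ≤ R) :
    volume {x : ι → ℝ | x ⬝ᵥ x ≤ R} =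
      ENNReal.ofReal (√R ^ Fintype.card ι * unitBallVolume (Fintype.card ι)) := by
  have hball : WithLp.toLp 2 ⁻¹' Metric.closedBall (0 : EuclideanSpace ℝ ι) √R =
      {x : ι → ℝ | x ⬝ᵥ x ≤ R} := by
    ext x
    simp [EuclideanSpace.norm_eq, Real.sqrt_le_sqrt_iff hR, dotProduct, sq]
  rw [← hball, (PiLp.volume_preserving_toLp ι).measure_preimage
    measurableSet_closedBall.nullMeasurableSet, EuclideanSpace.volume_closedBall, unitBallVolume,
    rpow_div_two_eq_sqrt _ pi_pos.le, rpow_natCast, ← ENNReal.ofReal_pow (Real.sqrt_nonneg _),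
    ← ENNReal.ofReal_mul (by positivity)]

/-- The half of the open unit cube centred at `z` that lies on the side of the origin, that is,
where `⟪z, x - z⟫ ≤ 0`. -/
def innerHalfCube (z : ι → ℝ) : Set (ι → ℝ) :=
  (fun x => x - z) ⁻¹' (Set.univ.pi (fun _ => Set.Ioo (-(1 / 2)) (1 / 2)) ∩ {u | z ⬝ᵥ u ≤ 0})

theorem measurableSet_innerHalfCube (z : ι → ℝ) : MeasurableSet (innerHalfCube z) :=
  ((MeasurableSet.univ_pi fun _ => measurableSet_Ioo).inter
    (measurableSet_le (by fun_prop) (by fun_prop))).preimage (by fun_prop)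

theorem one_le_two_mul_volume_innerHalfCube (z : ι → ℝ) : 1 ≤ 2 * volume (innerHalfCube z) := by
  simp only [innerHalfCube, sub_eq_add_neg, measure_preimage_add_right]
  refine le_trans (le_of_eq ?_)
    (measure_le_two_mul_measure_inter_nonpos volume (dotProduct_odd z) fun u hu i _ => ?_)
  · norm_num [Real.volume_pi_Ioo]
  · have := hu i trivial
    constructor <;> simp only [Pi.neg_apply] <;> linarith [this.1, this.2]

theorem pairwise_disjoint_innerHalfCube_intCast :
    Pairwise fun z w : ι → ℤ =>
      Disjoint (innerHalfCube fun i => (z i : ℝ)) (innerHalfCube fun i => (w i : ℝ)) := by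
  intro z w hzw
  refine Set.disjoint_left.2 fun x hxz hxw => hzw (funext fun i => ?_)
  have hz : x i - z i ∈ Set.Ioo (-(1 / 2) : ℝ) (1 / 2) := hxz.1 i trivial
  have hw : x i - w i ∈ Set.Ioo (-(1 / 2) : ℝ) (1 / 2) := hxw.1 i trivial
  have hlt : z i < w i + 1 := by exact_mod_cast (by linarith [hz.1, hw.2] : (z i : ℝ) < w i + 1)
  have hgt : w i < z i + 1 := by exact_mod_cast (by linarith [hz.2, hw.1] : (w i : ℝ) < z i + 1)
  omega

theorem dotProduct_self_le_of_mem_innerHalfCube {z x : ι → ℝ} (hx : x ∈ innerHalfCube z) :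
    x ⬝ᵥ x ≤ z ⬝ᵥ z + Fintype.card ι / 4 := by
  obtain ⟨u, rfl⟩ : ∃ u, x = u + z := ⟨x - z, by simp⟩
  obtain ⟨hcube, hinner⟩ : u ∈ Set.univ.pi (fun _ => Set.Ioo (-(1 / 2)) (1 / 2)) ∧ z ⬝ᵥ u ≤ 0 := by
    simpa [innerHalfCube] using hx
  have hu : u ⬝ᵥ u ≤ Fintype.card ι / 4 :=
    calc u ⬝ᵥ u ≤ ∑ _i : ι, (1 / 4 : ℝ) := Finset.sum_le_sum fun i _ => by
          nlinarith [(hcube i trivial).1, (hcube i trivial).2]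
      _ = Fintype.card ι / 4 := by simp [div_eq_mul_inv]
  simp only [add_dotProduct, dotProduct_add, dotProduct_comm u z]
  linarith

theorem card_integerBall_le [DecidableEq ι] [Nonempty ι] (r : ℕ) :
    (#(integerBall ι r) : ℝ) ≤
      2 * (√(r + Fintype.card ι / 4) ^ Fintype.card ι * unitBallVolume (Fintype.card ι)) := by
  let H : (ι → ℤ) → Set (ι → ℝ) := fun z => innerHalfCube fun i => (z i : ℝ)
  have hsub : (⋃ z ∈ integerBall ι r, H z) ⊆
      {x | x ⬝ᵥ x ≤ (r : ℝ) + Fintype.card ι / 4} := Set.iUnion₂_subset fun z hz x hx => by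
    have hzr : (fun i => (z i : ℝ)) ⬝ᵥ (fun i => (z i : ℝ)) ≤ r := by
      simpa [dotProduct] using (Int.cast_le (R := ℝ)).2 (mem_integerBall.1 hz)
    exact (dotProduct_self_le_of_mem_innerHalfCube hx).trans (by gcongr)
  have hcount : (#(integerBall ι r) : ENNReal) ≤
      2 * ENNReal.ofReal
        (√(r + Fintype.card ι / 4) ^ Fintype.card ι * unitBallVolume (Fintype.card ι)) :=
    calc (#(integerBall ι r) : ENNReal)
        ≤ ∑ z ∈ integerBall ι r, 2 * volume (H z) := by
          simpa using Finset.card_nsmul_le_sum (integerBall ι r) (fun z => 2 * volume (H z)) 1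
            fun z _ => one_le_two_mul_volume_innerHalfCube _
      _ = 2 * volume (⋃ z ∈ integerBall ι r, H z) := by
          rw [← Finset.mul_sum, measure_biUnion_finset
            (fun z _ w _ hzw => pairwise_disjoint_innerHalfCube_intCast hzw)
            fun z _ => measurableSet_innerHalfCube _]
      _ ≤ 2 * volume {x : ι → ℝ | x ⬝ᵥ x ≤ (r : ℝ) + Fintype.card ι / 4} := by gcongr
      _ = _ := by rw [volume_dotProduct_self_le (by positivity)]
  have := unitBallVolume_pos (Fintype.card ι)
  rwa [← ENNReal.ofReal_ofNat, ← ENNReal.ofReal_mul (by norm_num), ← ENNReal.ofReal_natCast,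
    ENNReal.ofReal_le_ofReal_iff (by positivity)] at hcount

end Volume

section Greedy

open scoped Finset Matrix

variable {ι : Type*} [Fintype ι]

/-- The lattice `{z : ι → ℤ | ∑ sᵢzᵢ = 0}` orthogonal to `s` has minimum at least `μ`, where the
minimum of a lattice is the squared length of its shortest nonzero vectors. -/
def OrthogonalMinAtLeast (μ : ℕ) (s : ι → ℕ) : Prop :=
  ∀ z : ι → ℤ, z ≠ 0 → (fun i => (s i : ℤ)) ⬝ᵥ z = 0 → (μ : ℤ) ≤ z ⬝ᵥ z

variable [DecidableEq ι]

/-- The coordinates `t` that the greedy construction avoids: all quotients `(c ⬝ᵥ w) / k` with `w`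
an integer point of squared length at most `μ`, `0 < c ⬝ᵥ w`, and `1 ≤ k`, `k ^ 2 < μ`; the largest
such `k` is `(μ - 1).sqrt`. Rounding the quotients that are not integers only adds spurious
values. -/
noncomputable def forbiddenCoords (μ : ℕ) (c : ι → ℤ) : Finset ℕ :=
  (Finset.Icc 1 (μ - 1).sqrt ×ˢ (integerBall ι μ).filter fun w => 0 < c ⬝ᵥ w).image
    fun q => (c ⬝ᵥ q.2).toNat / q.1

theorem two_mul_card_forbiddenCoords_add_le (μ : ℕ) (c : ι → ℤ) :
    2 * #(forbiddenCoords μ c) + (μ - 1).sqrt ≤ (μ - 1).sqrt * #(integerBall ι μ) := by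
  set P := (integerBall ι μ).filter fun w => 0 < c ⬝ᵥ w
  have hcard : #(forbiddenCoords μ c) ≤ (μ - 1).sqrt * #P :=
    Finset.card_image_le.trans (by simp [P])
  have hhalf : 2 * #P + 1 ≤ #(integerBall ι μ) :=
    two_mul_card_filter_pos_integerBall_add_one_le c μ
  nlinarith

theorem mem_forbiddenCoords {μ t k : ℕ} {c w : ι → ℤ} (ht : 0 < t) (hk : 0 < k)
    (hct : c ⬝ᵥ w = t * k) (hshort : w ⬝ᵥ w + (k : ℤ) ^ 2 < μ) : t ∈ forbiddenCoords μ c := by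
  have hnonneg : 0 ≤ w ⬝ᵥ w := Finset.sum_nonneg fun i _ => mul_self_nonneg (w i)
  have hkμ : k ^ 2 < μ := by exact_mod_cast (by linarith : (k : ℤ) ^ 2 < μ)
  refine Finset.mem_image.2 ⟨(k, w), ?_, ?_⟩
  · simp only [Finset.mem_product, Finset.mem_Icc, Finset.mem_filter, mem_integerBall,
      Nat.le_sqrt', hct]
    exact ⟨⟨hk, by omega⟩, by nlinarith, by positivity⟩
  · simp only [hct]
    rw [← Nat.cast_mul, Int.toNat_natCast, Nat.mul_div_cancel _ hk]

theorem le_of_notMem_forbiddenCoords {μ t : ℕ} {c : ι → ℤ} (ht : 0 < t)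
    (hforb : t ∉ forbiddenCoords μ c) {w : ι → ℤ} {k : ℤ} (hk : k ≠ 0)
    (hsum : c ⬝ᵥ w + t * k = 0) : (μ : ℤ) ≤ w ⬝ᵥ w + k ^ 2 := by
  wlog hkneg : k < 0 generalizing w k
  · simpa using this (w := -w) (neg_ne_zero.2 hk) (by rw [dotProduct_neg]; linarith) (by omega)
  by_contra! hshort
  obtain ⟨m, rfl⟩ := Int.exists_eq_neg_ofNat hkneg.le
  exact hforb (mem_forbiddenCoords ht (by omega : 0 < m) (by linarith) (by simpa using hshort))

theorem OrthogonalMinAtLeast.snoc {μ n t : ℕ} {s : Fin n → ℕ} (hs : OrthogonalMinAtLeast μ s)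
    (ht : 0 < t) (hforb : t ∉ forbiddenCoords μ fun i => (s i : ℤ)) :
    OrthogonalMinAtLeast μ (Fin.snoc s t : Fin (n + 1) → ℕ) := by
  intro z hz hsum
  obtain ⟨w, k, rfl⟩ : ∃ w k, z = (Fin.snoc w k : Fin (n + 1) → ℤ) :=
    ⟨Fin.init z, z (Fin.last n), (Fin.snoc_init_self z).symm⟩
  have hsum' : (fun i => (s i : ℤ)) ⬝ᵥ w + t * k = 0 := by
    simpa [dotProduct, Fin.sum_univ_castSucc] using hsum
  suffices (μ : ℤ) ≤ w ⬝ᵥ w + k ^ 2 by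
    simpa [dotProduct, Fin.sum_univ_castSucc, sq] using this
  rcases eq_or_ne k 0 with rfl | hk
  · have hw : w ≠ 0 := by
      rintro rfl
      exact hz (funext (Fin.lastCases (by simp) (by simp)))
    simpa using hs w hw (by simpa using hsum')
  · exact le_of_notMem_forbiddenCoords ht hforb hk hsum'

theorem exists_orthogonalMinAtLeast_two_mul_add_sqrt_le (μ n : ℕ) :
    ∃ s : Fin (n + 1) → ℕ, s 0 = 1 ∧ (∀ i, 0 < s i) ∧ OrthogonalMinAtLeast μ s ∧
      ∀ i, 2 * s i + (μ - 1).sqrt ≤ 2 + (μ - 1).sqrt * #(integerBall (Fin n) μ) := by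
  induction n with
  | zero =>
    refine ⟨fun _ => 1, rfl, fun _ => one_pos, fun z hz hsum => ?_, fun _ => ?_⟩
    · refine absurd (funext fun i => ?_) hz
      simpa [dotProduct, Subsingleton.elim (α := Fin 1) i 0] using hsum
    · simpa using Nat.le_mul_of_pos_right (μ - 1).sqrt
        (Finset.card_pos.2 ⟨(0 : Fin 0 → ℤ), by simp [mem_integerBall]⟩)
  | succ n ih =>
    obtain ⟨s, hs0, hspos, hsmin, hsle⟩ := ih
    set F := forbiddenCoords μ fun i => (s i : ℤ)
    have hF : 2 * #F + (μ - 1).sqrt ≤ _ := two_mul_card_forbiddenCoords_add_le μ _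
    obtain ⟨t, ht, hforb⟩ : ∃ t ∈ Finset.Icc 1 (#F + 1), t ∉ F :=
      Finset.exists_mem_notMem_of_card_lt_card (by simp)
    obtain ⟨htpos, htle⟩ := Finset.mem_Icc.1 ht
    refine ⟨Fin.snoc s t, ?_, ?_, hsmin.snoc htpos hforb, ?_⟩
    · simpa using hs0
    · exact Fin.lastCases (by rwa [Fin.snoc_last]) (by simpa using hspos)
    · refine Fin.lastCases (by rw [Fin.snoc_last]; omega) fun i => ?_
      have hdim := monotone_card_integerBall_fin μ n.le_succ
      simpa using (hsle i).trans (by gcongr)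

theorem le_sqrt_mul_div_two_of_two_mul_add_sqrt_le {μ N a : ℕ} (hμ : 1 ≤ μ) (hN : 3 ≤ N)
    (ha : 2 * a + (μ - 1).sqrt ≤ 2 + (μ - 1).sqrt * N) : (a : ℝ) ≤ √μ * (N / 2) := by
  set K := (μ - 1).sqrt
  have hK : (K : ℝ) ^ 2 + 1 ≤ μ := by
    have : K ^ 2 ≤ μ - 1 := (μ - 1).sqrt_le'
    exact_mod_cast (by omega : K ^ 2 + 1 ≤ μ)
  have hμ' : √(μ : ℝ) ^ 2 = μ := Real.sq_sqrt (by positivity)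
  have hKμ : (K : ℝ) ≤ √μ := Real.le_sqrt_of_sq_le (by linarith)
  -- Squared, this follows from `5 * K ^ 2 - 8 * K + 5 > 0`.
  have hgap : 2 + 2 * (K : ℝ) ≤ 3 * √μ :=
    abs_le_of_sq_le_sq' (by nlinarith [sq_nonneg ((K : ℝ) - 1)]) (by positivity) |>.2
  have ha' : 2 * (a : ℝ) + K ≤ 2 + K * N := by exact_mod_cast ha
  have hN' : (3 : ℝ) ≤ N := by exact_mod_cast hN
  nlinarith [mul_le_mul_of_nonneg_left hN' (sub_nonneg.2 hKμ)]

theorem exists_orthogonalMinAtLeast_le {μ : ℕ} (hμ : 1 ≤ μ) (n : ℕ) [NeZero n] :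
    ∃ s : Fin (n + 1) → ℕ, s 0 = 1 ∧ (∀ i, 0 < s i) ∧ OrthogonalMinAtLeast μ s ∧
      ∀ i, (s i : ℝ) ≤ √μ * (√(μ + n / 4) ^ n * unitBallVolume n) := by
  obtain ⟨s, hs0, hspos, hsmin, hsle⟩ := exists_orthogonalMinAtLeast_two_mul_add_sqrt_le μ n
  refine ⟨s, hs0, hspos, hsmin, fun i => ?_⟩
  have hcard : (#(integerBall (Fin n) μ) : ℝ) ≤ 2 * (√(μ + n / 4) ^ n * unitBallVolume n) := by
    simpa using card_integerBall_le (ι := Fin n) μ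
  calc (s i : ℝ) ≤ √μ * (#(integerBall (Fin n) μ) / 2) :=
        le_sqrt_mul_div_two_of_two_mul_add_sqrt_le hμ (three_le_card_integerBall hμ) (hsle i)
    _ ≤ √μ * (√(μ + n / 4) ^ n * unitBallVolume n) := by
        gcongr
        linarith

end Greedy

section Density

/-- The density of an `n`-dimensional lattice of minimum `m` and determinant `d`. The minimum is a
squared length and the determinant a squared covolume. -/
noncomputable def latticeDensity (n : ℕ) (m d : ℝ) : ℝ :=
  √(m ^ n / (4 ^ n * d)) * unitBallVolume n

theorem latticeDensity_anti_det (n : ℕ) {m d d' : ℝ} (hm : 0 ≤ m) (hd : 0 < d) (hdd' : d ≤ d') :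
    latticeDensity n m d' ≤ latticeDensity n m d := by
  have := unitBallVolume_pos n
  unfold latticeDensity
  gcongr

theorem latticeDensity_mul_sq (n : ℕ) {m : ℝ} (hm : 0 < m) (N : ℝ) :
    latticeDensity n m (N * (√m * (√(m + n / 4) ^ n * unitBallVolume n)) ^ 2) =
      (1 + n / (4 * m)) ^ (-(n : ℝ) / 2) / (2 ^ n * √(N * m)) := by
  have hV := unitBallVolume_pos n
  set V := unitBallVolume n with hVdef
  set x : ℝ := 1 + n / (4 * m) with hx
  have hx0 : 0 < x := by positivity
  have hmx : m + n / 4 = m * x := by rw [hx]; field_simp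
  have hradicand : m ^ n / (4 ^ n * (N * (√m * (√(m + n / 4) ^ n * V)) ^ 2)) =
      (x ^ n)⁻¹ / ((2 ^ n) ^ 2 * (N * m)) / V ^ 2 := by
    rw [mul_pow, mul_pow, pow_right_comm √_, Real.sq_sqrt hm.le, Real.sq_sqrt (by positivity), hmx,
      mul_pow m x, pow_right_comm 2 n 2]
    norm_num
    field_simp
  have hrpow : x ^ (-(n : ℝ) / 2) = √((x ^ n)⁻¹) := by
    rw [Real.sqrt_eq_rpow, ← Real.rpow_natCast, ← Real.rpow_neg hx0.le, ← Real.rpow_mul hx0.le]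
    ring_nf
  rw [latticeDensity, ← hVdef, hradicand, Real.sqrt_div' _ (by positivity), Real.sqrt_sq hV.le,
    div_mul_cancel₀ _ hV.ne', Real.sqrt_div (by positivity), Real.sqrt_mul (by positivity),
    Real.sqrt_sq (by positivity), hrpow]

end Density

/-- For every integer `μ ≥ 2` and every `n ≥ 1` there is a vector `(s₀,…,sₙ)` of positive
integers with `s₀ = 1` such that the lattice `Λₙ = {z ∈ ℤ^{n+1} : ∑ sᵢzᵢ = 0}` has minimum
at least `μ` and density `Δ(Λₙ) = √(μⁿ/(4ⁿ·∑ sᵢ²))·Vₙ ≥ (1+n/(4μ))^{-n/2}/(2ⁿ√((n+1)μ))`. -/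
theorem stmt_15 (μ n : ℕ) (hμ : 2 ≤ μ) (hn : 1 ≤ n) :
    ∃ s : Fin (n + 1) → ℕ, s 0 = 1 ∧ (∀ i, 0 < s i) ∧
      (∀ z : Fin (n + 1) → ℤ, z ≠ 0 → (∑ i, (s i : ℤ) * z i) = 0 →
        (μ : ℤ) ≤ ∑ i, (z i) ^ 2) ∧
      ((1 + (n : ℝ) / (4 * μ)) ^ (-(n : ℝ) / 2) / (2 ^ n * Real.sqrt ((n + 1) * μ)) ≤
        Real.sqrt ((μ : ℝ) ^ n / (4 ^ n * ∑ i, (s i : ℝ) ^ 2)) *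
          (π ^ ((n : ℝ) / 2) / Real.Gamma ((n : ℝ) / 2 + 1))) := by
  have : NeZero n := ⟨by omega⟩
  have hμ0 : (0 : ℝ) < μ := by positivity
  obtain ⟨s, hs0, hspos, hsmin, hsle⟩ := exists_orthogonalMinAtLeast_le (by omega : 1 ≤ μ) n
  refine ⟨s, hs0, hspos, by simpa only [OrthogonalMinAtLeast, dotProduct, ← sq] using hsmin, ?_⟩
  have hdet : ∑ i, (s i : ℝ) ^ 2 ≤ (n + 1) * (√μ * (√(μ + n / 4) ^ n * unitBallVolume n)) ^ 2 := by
    simpa using Finset.sum_le_card_nsmul Finset.univ (fun i => (s i : ℝ) ^ 2) _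
      fun i _ => pow_le_pow_left₀ (Nat.cast_nonneg _) (hsle i) 2
  have hdet_pos : 0 < ∑ i, (s i : ℝ) ^ 2 :=
    Finset.sum_pos (fun i _ => pow_pos (Nat.cast_pos.2 (hspos i)) 2) Finset.univ_nonempty
  rw [← latticeDensity_mul_sq n hμ0]
  exact latticeDensity_anti_det n hμ0.le hdet_pos hdet
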